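/- In the full power-set diagram G^M_0, every node v in V^M_0 \ (C ∪ I_m) is redundant, where C_m is the set of maximal clusters of C and I_m = {c ∩ c' : c, c' in C_m} is the set of pairwise intersections of maximal clusters. -/

import Mathlib

open Finset

/-- Restriction of a sub-assignment on `c` to a subset `s` (arbitrary values
outside `c`, only meaningful when `s ⊆ c`). -/
noncomputable def restr {V : Type*} [DecidableEq V] {X : V → Type*}
    [∀ i, Nonempty (X i)] (c s : Finset V) (x : (i : c) → X i.1) :
    (i : s) → X i.1 :=
  fun i => if h : i.1 ∈ c then x ⟨i.1, h⟩ else Classical.arbitrary _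

/-- The marginalisation constraint `∑_{x_{c\s}} μ_c(x_c) = μ_s(x_s)`. -/
noncomputable def marg {V : Type*} [DecidableEq V] {X : V → Type*}
    [∀ i, Fintype (X i)] [∀ i, Nonempty (X i)] [∀ i, DecidableEq (X i)]
    (c s : Finset V) (μc : ((i : c) → X i.1) → ℝ)
    (μs : ((i : s) → X i.1) → ℝ) : Prop :=
  ∀ y : (i : s) → X i.1,
    ∑ x ∈ Finset.univ.filter (fun x => restr c s x = y), μc x = μs y

/-! Marginals compose: if `μ_s` is the marginal of `μ_c` and `t ⊆ s`, then the constraints `c → t`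
and `s → t` agree. Given two edges `p → v` and `q → v`, pick maximal clusters `c ⊇ p` and `c' ⊇ q`.
As `v` is not an intersection of maximal clusters, `v ⊂ c ∩ c'`, so `c ∩ c'` is a node other than
`v` and the constraint into `v` can be moved along `p`, `c`, `c ∩ c'`, `c'`, `q`. -/

section Marginals

variable {V : Type*} [DecidableEq V] {X : V → Type*} [∀ i, Nonempty (X i)]

theorem restr_self (c : Finset V) (x : (i : c) → X i.1) : restr c c x = x := by
  funext i
  simp [restr]

theorem restr_restr_of_subset (c : Finset V) {s t : Finset V} (hts : t ⊆ s)
    (x : (i : c) → X i.1) : restr s t (restr c s x) = restr c t x := by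
  funext i
  simp [restr, hts i.2]

variable [∀ i, Fintype (X i)] [∀ i, DecidableEq (X i)]

theorem marg_self (c : Finset V) (f : ((i : c) → X i.1) → ℝ) : marg c c f f := by
  intro y
  simp [restr_self, Finset.filter_eq']

variable {c s t : Finset V} {f : ((i : c) → X i.1) → ℝ} {g : ((i : s) → X i.1) → ℝ}

theorem marg.sum_restr_fiber_eq (hfg : marg c s f g) (hts : t ⊆ s) (y : (i : t) → X i.1) :
    ∑ x with restr c t x = y, f x = ∑ z with restr s t z = y, g z := by
  symm
  calc ∑ z with restr s t z = y, g z
      = ∑ z with restr s t z = y, ∑ x with restr c s x = z, f x :=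
        Finset.sum_congr rfl fun z _ => (hfg z).symm
    _ = ∑ x with restr s t (restr c s x) = y, f x := by
        simp only [Finset.sum_fiberwise_eq_sum_filter, Finset.mem_filter_univ]
    _ = ∑ x with restr c t x = y, f x := by
        simp only [restr_restr_of_subset c hts]

theorem marg.marg_iff_of_subset (hfg : marg c s f g) (hts : t ⊆ s)
    (h : ((i : t) → X i.1) → ℝ) : marg c t f h ↔ marg s t g h :=
  forall_congr' fun y => by rw [hfg.sum_restr_fiber_eq hts y]

end Marginals

section PowersetDiagram

variable {V : Type*}

/-- The edges `c → s` of the full power-set diagram `G^M_0`, encoded as pairs `(c, s)`. The nodes of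
the diagram are the subsets of clusters, that is, the members of `lowerClosure C`. -/
def powersetEdges (C : Set (Finset V)) : Set (Finset V × Finset V) :=
  {e | e.1 ∈ lowerClosure C ∧ e.2 ∈ lowerClosure C ∧ e.2 ⊂ e.1}

variable [DecidableEq V]

/-- The set `I_m` of pairwise intersections of maximal clusters. The two clusters may coincide, so
every maximal cluster belongs to it. -/
def maximalClusterInters (C : Set (Finset V)) : Set (Finset V) :=
  Set.image2 (· ∩ ·) {c | Maximal (· ∈ C) c} {c | Maximal (· ∈ C) c}

variable (X : V → Type*) [∀ i, Fintype (X i)] [∀ i, Nonempty (X i)] [∀ i, DecidableEq (X i)]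

/-- The families `μ` satisfying the marginalisation constraints of the power-set diagram in which
`p → v` is the only edge kept among those entering `v`. Neither nonnegativity nor normalisation is
imposed. -/
def singleEdgeSolutions (C : Set (Finset V)) (p v : Finset V) :
    Set (∀ a : Finset V, ((i : a) → X i.1) → ℝ) :=
  {μ | (∀ e ∈ powersetEdges C, e.2 ≠ v → marg e.1 e.2 (μ e.1) (μ e.2)) ∧ marg p v (μ p) (μ v)}

/-- Redundancy of `v` in the power-set diagram: its incoming edges are pairwise equivalent, where
two edges into `v` are equivalent if keeping only the one or only the other among the edges into `v`
leaves the same families of marginals. -/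
def IsRedundantNode (C : Set (Finset V)) (v : Finset V) : Prop :=
  ∀ p q, (p, v) ∈ powersetEdges C → (q, v) ∈ powersetEdges C →
    singleEdgeSolutions X C p v = singleEdgeSolutions X C q v

variable {X} {C : Set (Finset V)} {v : Finset V}

theorem marg_iff_marg_of_ssubset_of_subset {μ : ∀ a : Finset V, ((i : a) → X i.1) → ℝ}
    (hμ : ∀ e ∈ powersetEdges C, e.2 ≠ v → marg e.1 e.2 (μ e.1) (μ e.2))
    {p c : Finset V} (hc : c ∈ lowerClosure C) (hvp : v ⊂ p) (hpc : p ⊆ c) :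
    marg p v (μ p) (μ v) ↔ marg c v (μ c) (μ v) := by
  have hcp : marg c p (μ c) (μ p) := by
    obtain rfl | hlt := hpc.eq_or_ssubset
    · exact marg_self p (μ p)
    · exact hμ (c, p) ⟨hc, (lowerClosure C).lower hpc hc, hlt⟩ hvp.ne'
  exact (hcp.marg_iff_of_subset hvp.subset (μ v)).symm

theorem ssubset_inter_of_notMem_maximalClusterInters (hv : v ∉ maximalClusterInters C)
    {c c' : Finset V} (hc : Maximal (· ∈ C) c) (hc' : Maximal (· ∈ C) c')
    (hvc : v ⊆ c) (hvc' : v ⊆ c') : v ⊂ c ∩ c' :=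
  (Finset.subset_inter hvc hvc').ssubset_of_ne fun h => hv ⟨c, hc, c', hc', h.symm⟩

theorem maximal_cluster_intersection_redundant_nodes_general
    (hC : ∀ c ∈ C, ∃ m, c ⊆ m ∧ Maximal (· ∈ C) m) (hv : v ∉ maximalClusterInters C) :
    IsRedundantNode X C v := by
  rintro p q ⟨⟨a, ha, hpa⟩, -, hvp⟩ ⟨⟨b, hb, hqb⟩, -, hvq⟩
  obtain ⟨c, hac, hc⟩ := hC a ha
  obtain ⟨c', hbc', hc'⟩ := hC b hb
  have hpc : p ⊆ c := hpa.trans hac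
  have hqc' : q ⊆ c' := hqb.trans hbc'
  have hvcc' : v ⊂ c ∩ c' := ssubset_inter_of_notMem_maximalClusterInters hv hc hc'
    (hvp.subset.trans hpc) (hvq.subset.trans hqc')
  have hnode : c ∈ lowerClosure C := subset_lowerClosure hc.prop
  have hnode' : c' ∈ lowerClosure C := subset_lowerClosure hc'.prop
  ext μ
  refine and_congr_right fun hμ => ?_
  calc marg p v (μ p) (μ v)
      ↔ marg c v (μ c) (μ v) := marg_iff_marg_of_ssubset_of_subset hμ hnode hvp hpc
    _ ↔ marg (c ∩ c') v (μ (c ∩ c')) (μ v) :=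
        (marg_iff_marg_of_ssubset_of_subset hμ hnode hvcc' Finset.inter_subset_left).symm
    _ ↔ marg c' v (μ c') (μ v) :=
        marg_iff_marg_of_ssubset_of_subset hμ hnode' hvcc' Finset.inter_subset_right
    _ ↔ marg q v (μ q) (μ v) := (marg_iff_marg_of_ssubset_of_subset hμ hnode' hvq hqc').symm

end PowersetDiagram

/-- In the full power-set diagram `G^M_0`, every node outside `C ∪ I_m` (where
`I_m` is the set of pairwise intersections of maximal clusters of `C`) is
redundant: all its incoming edges are pairwise equivalent. -/
theorem maximal_cluster_intersection_redundant_nodes {V : Type*} [DecidableEq V]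
    {X : V → Type*} [∀ i, Fintype (X i)] [∀ i, Nonempty (X i)]
    [∀ i, DecidableEq (X i)] (C : Finset (Finset V)) :
    ∀ v ∈ {v : Finset V | ∃ c ∈ C, v ⊆ c},
      v ∉ (↑C : Set (Finset V)) ∪
        {s : Finset V | ∃ c ∈ C, ∃ c' ∈ C,
          (∀ d ∈ C, ¬ c ⊂ d) ∧ (∀ d ∈ C, ¬ c' ⊂ d) ∧ s = c ∩ c'} →
      ∀ p1 p2 : Finset V,
        (p1, v) ∈ {e : Finset V × Finset V |
            e.1 ∈ {v : Finset V | ∃ c ∈ C, v ⊆ c}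
            ∧ e.2 ∈ {v : Finset V | ∃ c ∈ C, v ⊆ c} ∧ e.2 ⊂ e.1} →
        (p2, v) ∈ {e : Finset V × Finset V |
            e.1 ∈ {v : Finset V | ∃ c ∈ C, v ⊆ c}
            ∧ e.2 ∈ {v : Finset V | ∃ c ∈ C, v ⊆ c} ∧ e.2 ⊂ e.1} →
        {μ : ∀ a : Finset V, ((i : a) → X i.1) → ℝ |
            (∀ e ∈ {e : Finset V × Finset V |
                e.1 ∈ {v : Finset V | ∃ c ∈ C, v ⊆ c}
                ∧ e.2 ∈ {v : Finset V | ∃ c ∈ C, v ⊆ c} ∧ e.2 ⊂ e.1},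
              e.2 ≠ v → marg e.1 e.2 (μ e.1) (μ e.2))
            ∧ marg p1 v (μ p1) (μ v)}
        = {μ : ∀ a : Finset V, ((i : a) → X i.1) → ℝ |
            (∀ e ∈ {e : Finset V × Finset V |
                e.1 ∈ {v : Finset V | ∃ c ∈ C, v ⊆ c}
                ∧ e.2 ∈ {v : Finset V | ∃ c ∈ C, v ⊆ c} ∧ e.2 ⊂ e.1},
              e.2 ≠ v → marg e.1 e.2 (μ e.1) (μ e.2))
            ∧ marg p2 v (μ p2) (μ v)} := by
  rintro v - hv
  exact maximal_cluster_intersection_redundant_nodes_general (C := ↑C)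
    (fun c hc => C.exists_le_maximal hc) fun ⟨c, hc, c', hc', h⟩ => hv <| .inr
      ⟨c, hc.prop, c', hc'.prop, fun _ hd => hc.not_gt hd, fun _ hd => hc'.not_gt hd, h.symm⟩
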